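/- Let k be a field of characteristic different from 2 and let q₁, q₂, q₃ ∈ k[x,z] be binary quadratic forms. Then −4·R(q₁,q₂,q₃) = (Ω₁₂ ∘ Ω₂₃ ∘ Ω₃₁)(q₁(x₁,z₁)·q₂(x₂,z₂)·q₃(x₃,z₃)), where the right-hand side, a priori a polynomial in k[x₁,z₁,x₂,z₂,x₃,z₃], is a constant. -/

import Mathlib

open MvPolynomial

/-- The determinant `R(q₁,q₂,q₃)` of three binary quadratic forms in the basis `x², xz, z²`. -/
noncomputable def Rdet {k : Type*} [CommRing k] (q₁ q₂ q₃ : MvPolynomial (Fin 2) k) : k :=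
  Matrix.det
    !![coeff (Finsupp.single 0 2) q₁, coeff (Finsupp.single 0 1 + Finsupp.single 1 1) q₁,
         coeff (Finsupp.single 1 2) q₁;
       coeff (Finsupp.single 0 2) q₂, coeff (Finsupp.single 0 1 + Finsupp.single 1 1) q₂,
         coeff (Finsupp.single 1 2) q₂;
       coeff (Finsupp.single 0 2) q₃, coeff (Finsupp.single 0 1 + Finsupp.single 1 1) q₃,
         coeff (Finsupp.single 1 2) q₃]

/-- The polynomial ring `k[x₁,z₁,x₂,z₂,x₃,z₃]`, indexed so that `(i,0) = xᵢ₊₁`, `(i,1) = zᵢ₊₁`. -/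
abbrev P6 (k : Type*) [CommSemiring k] := MvPolynomial (Fin 3 × Fin 2) k

/-- The Cayley operator `Ω_{ij} = ∂²/∂xᵢ∂zⱼ − ∂²/∂zᵢ∂xⱼ`. -/
noncomputable def Omega {k : Type*} [CommRing k] (i j : Fin 3) (p : P6 k) : P6 k :=
  pderiv (i, (0 : Fin 2)) (pderiv (j, (1 : Fin 2)) p) -
    pderiv (i, (1 : Fin 2)) (pderiv (j, (0 : Fin 2)) p)

/-- View `q(x,z)` as the polynomial `q(xᵢ,zᵢ)` in `k[x₁,z₁,x₂,z₂,x₃,z₃]`. -/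
noncomputable def embed {k : Type*} [CommSemiring k] (i : Fin 3)
    (q : MvPolynomial (Fin 2) k) : P6 k :=
  rename (fun j => (i, j)) q

/-!
Exactly two of the three Cayley operators differentiate in the variables of a given `qᵢ`, so the
iterated operator contracts the Hessians of `q₁`, `q₂`, `q₃` cyclically along the symplectic form
`J = !![0, 1; -1, 0]`: for arbitrary polynomials it equals
`tr (J Hess q₁ · J Hess q₂ · J Hess q₃)`. If the `qᵢ` are quadratic forms `a x² + b xz + c z²`,
these three matrices are constant elements of `sl₂`. On `sl₂` the form `tr (A B C)` is alternating,
hence a multiple of the determinant of the coordinates `(2a, b, 2c)`, whose two factors `2` account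
for the constant `4`.
-/

section SecondDerivatives

variable {σ R : Type*} [CommSemiring R]

theorem pderiv_pderiv_comm (s t : σ) (q : MvPolynomial σ R) :
    pderiv s (pderiv t q) = pderiv t (pderiv s q) := by
  obtain rfl | hst := eq_or_ne s t
  · rfl
  · ext m
    simp only [coeff_pderiv, Finsupp.add_apply, Finsupp.single_eq_of_ne hst,
      Finsupp.single_eq_of_ne hst.symm, add_zero, add_right_comm m, mul_right_comm]

theorem pderiv_pderiv_eq_C_of_isHomogeneous_two [DecidableEq σ] {q : MvPolynomial σ R}
    (hq : q.IsHomogeneous 2) (s t : σ) :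
    pderiv s (pderiv t q) =
      C ((if s = t then 2 else 1) * coeff (Finsupp.single s 1 + Finsupp.single t 1) q) := by
  have totalDegree_eq_zero : (pderiv s (pderiv t q)).totalDegree = 0 :=
    (totalDegree_zero_iff_isHomogeneous _).mpr hq.pderiv.pderiv
  rw [totalDegree_eq_zero_iff_eq_C.mp totalDegree_eq_zero, coeff_pderiv, coeff_pderiv]
  split_ifs with hst <;> simp [hst, one_add_one_eq_two, mul_comm]

end SecondDerivatives

section HamiltonianMatrix

variable {R : Type*} [CommRing R]

/-- The matrix `J * Hess q`, with `J = !![0, 1; -1, 0]` and `Hess q` the matrix of second partial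
derivatives of `q(x, z)`: the Jacobian of the Hamiltonian vector field of `q`, with values in
`sl₂`. -/
noncomputable def hamiltonianMatrix (q : MvPolynomial (Fin 2) R) :
    Matrix (Fin 2) (Fin 2) (MvPolynomial (Fin 2) R) :=
  !![pderiv 1 (pderiv 0 q), pderiv 1 (pderiv 1 q);
    -pderiv 0 (pderiv 0 q), -pderiv 0 (pderiv 1 q)]

theorem hamiltonianMatrix_eq_map_C_of_isHomogeneous_two {q : MvPolynomial (Fin 2) R}
    (hq : q.IsHomogeneous 2) :
    hamiltonianMatrix q =
      !![coeff (Finsupp.single 0 1 + Finsupp.single 1 1) q, 2 * coeff (Finsupp.single 1 2) q;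
        -(2 * coeff (Finsupp.single 0 2) q),
          -coeff (Finsupp.single 0 1 + Finsupp.single 1 1) q].map C := by
  rw [hamiltonianMatrix, pderiv_pderiv_comm 1 0]
  simp only [pderiv_pderiv_eq_C_of_isHomogeneous_two hq, ← Finsupp.single_add, one_add_one_eq_two,
    if_true, zero_ne_one, if_false, one_mul, ← C_neg]
  ext1 s t
  fin_cases s <;> fin_cases t <;> rfl

theorem trace_traceless_mul_mul_eq_neg_det (a₁ b₁ c₁ a₂ b₂ c₂ a₃ b₃ c₃ : R) :
    (!![b₁, c₁; -a₁, -b₁] * !![b₂, c₂; -a₂, -b₂] * !![b₃, c₃; -a₃, -b₃]).trace =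
      -!![a₁, b₁, c₁; a₂, b₂, c₂; a₃, b₃, c₃].det := by
  simp only [Matrix.mul_fin_two, Matrix.trace_fin_two_of, Matrix.det_fin_three, Matrix.of_apply,
    Matrix.cons_val]
  ring

theorem det_two_mul_eq_four_mul_Rdet (q₁ q₂ q₃ : MvPolynomial (Fin 2) R) :
    !![2 * coeff (Finsupp.single 0 2) q₁, coeff (Finsupp.single 0 1 + Finsupp.single 1 1) q₁,
         2 * coeff (Finsupp.single 1 2) q₁;
       2 * coeff (Finsupp.single 0 2) q₂, coeff (Finsupp.single 0 1 + Finsupp.single 1 1) q₂,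
         2 * coeff (Finsupp.single 1 2) q₂;
       2 * coeff (Finsupp.single 0 2) q₃, coeff (Finsupp.single 0 1 + Finsupp.single 1 1) q₃,
         2 * coeff (Finsupp.single 1 2) q₃].det = 4 * Rdet q₁ q₂ q₃ := by
  simp only [Rdet, Matrix.det_fin_three, Matrix.of_apply, Matrix.cons_val]
  ring

end HamiltonianMatrix

section CayleyOperator

variable {R : Type*}

theorem embed_C [CommSemiring R] (i : Fin 3) (a : R) : embed i (C a) = C a :=
  rename_C _ a

theorem embed_neg [CommRing R] (i : Fin 3) (q : MvPolynomial (Fin 2) R) :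
    embed i (-q) = -embed i q :=
  map_neg (rename _) q

theorem pderiv_embed [CommSemiring R] (i j : Fin 3) (s : Fin 2) (q : MvPolynomial (Fin 2) R) :
    pderiv (i, s) (embed j q) = if i = j then embed j (pderiv s q) else 0 := by
  split_ifs with hij
  · subst hij
    exact pderiv_rename (Prod.mk_right_injective i) s q
  · refine pderiv_eq_zero_of_notMem_vars fun hmem => hij ?_
    obtain ⟨t, -, ht⟩ := mem_vars_rename _ _ hmem
    exact (congrArg Prod.fst ht).symm

theorem Omega_sub [CommRing R] (i j : Fin 3) (p p' : P6 R) :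
    Omega i j (p - p') = Omega i j p - Omega i j p' := by
  simp only [Omega, map_sub]
  ring

-- The third factor moves to the front: the result is then in the shape to which the next operator
-- of the cycle `Ω₃₁, Ω₂₃, Ω₁₂` applies.
theorem Omega_embed_mul_embed_mul_embed [CommRing R] {i j l : Fin 3} (hij : i ≠ j) (hil : i ≠ l)
    (hjl : j ≠ l) (f g h : MvPolynomial (Fin 2) R) :
    Omega i j (embed i f * embed j g * embed l h) =
      embed l h * embed i (pderiv 0 f) * embed j (pderiv 1 g) -
        embed l h * embed i (pderiv 1 f) * embed j (pderiv 0 g) := by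
  simp only [Omega, pderiv_mul, pderiv_embed, if_true, if_neg hij, if_neg hij.symm, if_neg hil,
    if_neg hjl, zero_mul, mul_zero, zero_add, add_zero]
  ring

theorem Omega_Omega_Omega_eq_trace [CommRing R] (q₁ q₂ q₃ : MvPolynomial (Fin 2) R) :
    Omega 0 1 (Omega 1 2 (Omega 2 0 (embed 0 q₁ * embed 1 q₂ * embed 2 q₃))) =
      ((hamiltonianMatrix q₁).map (embed 0) * (hamiltonianMatrix q₂).map (embed 1) *
        (hamiltonianMatrix q₃).map (embed 2)).trace := by
  rw [← mul_rotate (embed 2 q₃)]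
  simp only [Omega_embed_mul_embed_mul_embed, Omega_sub, ne_eq, Fin.reduceEq, not_false_eq_true]
  simp only [hamiltonianMatrix, Matrix.trace_fin_two, Matrix.mul_apply, Fin.sum_univ_two,
    Matrix.map_apply, Matrix.of_apply, Matrix.cons_val, embed_neg,
    pderiv_pderiv_comm (1 : Fin 2) 0]
  ring

end CayleyOperator

theorem statement3_general {R : Type*} [CommRing R] {q₁ q₂ q₃ : MvPolynomial (Fin 2) R}
    (h₁ : q₁.IsHomogeneous 2) (h₂ : q₂.IsHomogeneous 2) (h₃ : q₃.IsHomogeneous 2) :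
    Omega 0 1 (Omega 1 2 (Omega 2 0 (embed 0 q₁ * embed 1 q₂ * embed 2 q₃))) =
      C (-4 * Rdet q₁ q₂ q₃) := by
  have map_embed_C (i : Fin 3) (M : Matrix (Fin 2) (Fin 2) R) :
      (M.map C).map (embed i) = M.map C := by
    rw [Matrix.map_map]
    exact congrArg M.map (funext (embed_C i))
  rw [Omega_Omega_Omega_eq_trace, hamiltonianMatrix_eq_map_C_of_isHomogeneous_two h₁,
    hamiltonianMatrix_eq_map_C_of_isHomogeneous_two h₂,
    hamiltonianMatrix_eq_map_C_of_isHomogeneous_two h₃, map_embed_C, map_embed_C, map_embed_C,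
    ← Matrix.map_mul, ← Matrix.map_mul, ← AddMonoidHom.map_trace,
    trace_traceless_mul_mul_eq_neg_det, det_two_mul_eq_four_mul_Rdet, neg_mul]

/-- For binary quadratic forms `q₁,q₂,q₃` over a field of characteristic `≠ 2`,
`−4·R(q₁,q₂,q₃) = (Ω₁₂ ∘ Ω₂₃ ∘ Ω₃₁)(q₁(x₁,z₁)·q₂(x₂,z₂)·q₃(x₃,z₃))`; in particular the
right-hand side is a constant polynomial. -/
theorem statement3 {k : Type*} [Field k] (hchar : (2 : k) ≠ 0)
    (q₁ q₂ q₃ : MvPolynomial (Fin 2) k)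
    (h₁ : q₁.IsHomogeneous 2) (h₂ : q₂.IsHomogeneous 2) (h₃ : q₃.IsHomogeneous 2) :
    Omega 0 1 (Omega 1 2 (Omega 2 0 (embed 0 q₁ * embed 1 q₂ * embed 2 q₃))) =
      C (-4 * Rdet q₁ q₂ q₃) :=
  statement3_general h₁ h₂ h₃
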